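/- arXiv:1404.0587 — 3 statements merged into one kernel-verified Lean document; each statement's English description precedes it below -/
import Mathlib

section
/- (Structure part of Proposition 1.) Let m, n ≥ 1, let w_x : Fin m → ℝ and w_y : Fin n → ℝ be positive element widths and heights of a tensor-product rectangular grid, let α > 0, let β = (b₁, b₂) ∈ ℝ² be a constant convective field, and let γ̄ : Fin m × Fin n → ℝ satisfy γ̄(i,j) > 0 for all (i,j). For each edge e of the grid define: for the vertical edge between horizontally adjacent elements (i,j) and (i+1,j), d_e = (w_x i + w_x(i+1))/2, |e| = w_y j, Pe_e = |b₁| d_e/(2α); for the horizontal edge between vertically adjacent elements (i,j) and (i,j+1), d_e = (w_y j + w_y(j+1))/2, |e| = w_x i, Pe_e = |b₂| d_e/(2α); for a boundary edge of element (i,j), d_e = w_x i/2 (left/right boundary edge, |e| = w_y j, Pe_e = |b₁| d_e/(2α)) or d_e = w_y j/2 (bottom/top boundary edge, |e| = w_x i, Pe_e = |b₂| d_e/(2α)). Let ρ_e ≥ max(Pe_e − 1, 0) be given for every edge e. Define the stiffness matrix K indexed by Fin m × Fin n as follows: K_{(i,j),(i+1,j)} = (−α(1+ρ_e)/d_e +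 b₁/2)·w_y j and K_{(i+1,j),(i,j)} = (−α(1+ρ_e)/d_e − b₁/2)·w_y j for each vertical interior edge e; K_{(i,j),(i,j+1)} = (−α(1+ρ_e)/d_e + b₂/2)·w_x i and K_{(i,j+1),(i,j)} = (−α(1+ρ_e)/d_e − b₂/2)·w_x i for each horizontal interior edge e; all other off-diagonal entries are zero; and K_{(i,j),(i,j)} = Σ_{e incident to (i,j)} (α(1+ρ_e)/d_e + β·n_e/2)·|e| + γ̄(i,j)·w_x i·w_y j, where n_e is the outward unit normal of element (i,j) on edge e (so the β·n_e contributions over opposite edges cancel). Then every off-diagonal entry of K is nonpositive, every diagonal entry of K is positive, and K is strictly diagonally dominant with respect to its columns: for every index c, K_{c,c} > Σ_{r ≠ c} |K_{r,c}|. -/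
open Finset

/-- Distance `d_e` associated with the grid line at index `k ∈ {0, …, m}` of a 1D
partition with `m` element widths `w 0, …, w (m-1)`: half the first (resp. last) element
width for the boundary lines `k = 0` (resp. `k = m`), and the average
`(w (k-1) + w k)/2` of the two adjacent element widths for interior lines. -/
noncomputable def dEdge (w : ℕ → ℝ) (m k : ℕ) : ℝ :=
  if k = 0 then w 0 / 2
  else if k = m then w (m - 1) / 2
  else (w (k - 1) + w k) / 2

/-- The stiffness matrix of the stabilized dual mixed-finite volume (MFV) scheme on an
`m × n` tensor-product rectangular grid with element widths `wx` and heights `wy`,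
diffusion coefficient `α`, constant convective field `β = (b₁, b₂)`, elementwise mean
reaction coefficients `γ`, and artificial viscosities `ρv k j` (on the vertical edge
lying on grid line `k ∈ {0, …, m}` in row `j`) and `ρh k i` (on the horizontal edge lying
on grid line `k ∈ {0, …, n}` in column `i`).

The diagonal entry of element `(i,j)` collects the contributions
`(α(1+ρ_e)/d_e + β·n_e/2)·|e|` of its four incident edges (outward normals
`∓x, ∓y`) plus `γ̄(i,j)·|K|`; the off-diagonal entries are
`(-α(1+ρ_e)/d_e + β·n_e/2)·|e|` for each pair of adjacent elements, and all remaining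
entries vanish. -/
noncomputable def mfvMatrix (m n : ℕ) (α b₁ b₂ : ℝ) (wx wy : ℕ → ℝ)
    (γ ρv ρh : ℕ → ℕ → ℝ) :
    Matrix (Fin m × Fin n) (Fin m × Fin n) ℝ := fun p q =>
  let i : ℕ := p.1
  let j : ℕ := p.2
  let dv : ℕ → ℝ := dEdge wx m
  let dh : ℕ → ℝ := dEdge wy n
  if p = q then
    -- left, right, bottom and top edge contributions, plus the reaction term
    (α * (1 + ρv i j) / dv i + (-b₁) / 2) * wy j
      + (α * (1 + ρv (i + 1) j) / dv (i + 1) + b₁ / 2) * wy j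
      + (α * (1 + ρh j i) / dh j + (-b₂) / 2) * wx i
      + (α * (1 + ρh (j + 1) i) / dh (j + 1) + b₂ / 2) * wx i
      + γ i j * (wx i * wy j)
  else if p.2 = q.2 ∧ (q.1 : ℕ) = i + 1 then
    -- K_{(i,j),(i+1,j)}, across the vertical edge on grid line i+1
    (-(α * (1 + ρv (i + 1) j)) / dv (i + 1) + b₁ / 2) * wy j
  else if p.2 = q.2 ∧ i = (q.1 : ℕ) + 1 then
    -- K_{(i+1,j),(i,j)}, across the vertical edge on grid line i (= p.1)
    (-(α * (1 + ρv i j)) / dv i - b₁ / 2) * wy j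
  else if p.1 = q.1 ∧ (q.2 : ℕ) = j + 1 then
    -- K_{(i,j),(i,j+1)}, across the horizontal edge on grid line j+1
    (-(α * (1 + ρh (j + 1) i)) / dh (j + 1) + b₂ / 2) * wx i
  else if p.1 = q.1 ∧ j = (q.2 : ℕ) + 1 then
    -- K_{(i,j+1),(i,j)}, across the horizontal edge on grid line j (= p.2)
    (-(α * (1 + ρh j i)) / dh j - b₂ / 2) * wx i
  else 0

/-! The condition `ρ_e ≥ Pe_e - 1` says exactly that the stabilized diffusion `α (1 + ρ_e) / d_e`
outweighs the convection `|β · n_e| / 2`, so that every edge contributes a nonnegative amount to the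
diagonal. Since the normal of a common edge changes sign with the element, the entry of column `c`
in the row of a neighbour is minus the contribution of the common edge to `K_{c,c}`. Hence the
absolute values off the diagonal sum to at most the four edge contributions, and `K_{c,c}` exceeds
these by the reaction term. -/

lemma dEdge_pos {w : ℕ → ℝ} {m k : ℕ} (hm : 0 < m) (hw : ∀ i < m, 0 < w i) (hk : k ≤ m) :
    0 < dEdge w m k := by
  unfold dEdge
  split_ifs
  · exact half_pos (hw 0 hm)
  · exact half_pos (hw (m - 1) (by lia))
  · exact half_pos (add_pos (hw (k - 1) (by lia)) (hw k (by lia)))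

lemma sum_le_sum_of_subsingleton {ι σ R : Type*} [Fintype σ]
    [AddCommMonoid R] [PartialOrder R] [IsOrderedAddMonoid R]
    {t : Finset ι} {v : ι → R} {a : σ → R} {P : σ → ι → Prop} [∀ s, DecidablePred (P s)]
    (ha : ∀ s, 0 ≤ a s) (hP : ∀ s, {r | P s r}.Subsingleton)
    (hv : ∀ r ∈ t, v r ≤ ∑ s, if P s r then a s else 0) :
    ∑ r ∈ t, v r ≤ ∑ s, a s := by
  have sum_over_t_le (s : σ) : ∑ r ∈ t, (if P s r then a s else 0) ≤ a s := by
    rw [Finset.sum_ite_zero t (P s) (fun r _ r' _ hr hr' ↦ hP s hr hr')]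
    split_ifs
    exacts [le_rfl, ha s]
  calc ∑ r ∈ t, v r
    _ ≤ ∑ r ∈ t, ∑ s, (if P s r then a s else 0) := Finset.sum_le_sum hv
    _ = ∑ s, ∑ r ∈ t, (if P s r then a s else 0) := Finset.sum_comm
    _ ≤ ∑ s, a s := Finset.sum_le_sum fun s _ ↦ sum_over_t_le s

/-- The coefficient `α (1 + ρ) / d + b / 2` of the discrete flux leaving an element through an
edge, where `b` is the component of the convective field along the outward normal. -/
noncomputable def outflowCoeff (α b d ρ : ℝ) : ℝ :=
  α * (1 + ρ) / d + b / 2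

lemma outflowCoeff_nonneg {α b d ρ : ℝ} (hα : 0 < α) (hd : 0 < d)
    (hρ : |b| * d / (2 * α) - 1 ≤ ρ) : 0 ≤ outflowCoeff α b d ρ := by
  have convection_le_diffusion : |b| / 2 ≤ α * (1 + ρ) / d := by
    rw [sub_le_iff_le_add', div_le_iff₀ (by positivity)] at hρ
    rw [le_div_iff₀ hd]
    linarith
  unfold outflowCoeff
  linarith [neg_abs_le b]

/-- The four sides of a rectangular element. -/
inductive Side
  | left | right | bottom | top

namespace Side

instance : Fintype Side where
  elems := ⟨{left, right, bottom, top}, by simp⟩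
  complete s := by cases s <;> simp

lemma sum_eq {M : Type*} [AddCommMonoid M] (f : Side → M) :
    ∑ s, f s = f left + f right + f bottom + f top := by
  change (Multiset.map f {left, right, bottom, top}).sum = _
  simp [add_assoc]

variable {m n : ℕ}

/-- `s.IsAcross c r` means that the element `r` is the neighbour of the element `c` across the side
`s` of `c`. -/
def IsAcross : Side → Fin m × Fin n → Fin m × Fin n → Prop
  | left, c, r => r.2 = c.2 ∧ (c.1 : ℕ) = r.1 + 1
  | right, c, r => r.2 = c.2 ∧ (r.1 : ℕ) = c.1 + 1
  | bottom, c, r => r.1 = c.1 ∧ (c.2 : ℕ) = r.2 + 1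
  | top, c, r => r.1 = c.1 ∧ (r.2 : ℕ) = c.2 + 1

instance (s : Side) (c r : Fin m × Fin n) : Decidable (s.IsAcross c r) := by
  cases s <;> exact inferInstanceAs (Decidable (_ ∧ _))

lemma IsAcross.ne {s : Side} {c r : Fin m × Fin n} (h : s.IsAcross c r) : r ≠ c := by
  rintro rfl
  cases s <;> simp [IsAcross] at h

lemma subsingleton_isAcross (s : Side) (c : Fin m × Fin n) :
    {r | s.IsAcross c r}.Subsingleton := by
  intro r hr r' hr'
  cases s <;> ext <;> simp only [IsAcross, Set.mem_ofPred_eq] at hr hr' <;> lia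

end Side

/-- The contribution `(α (1 + ρ_e) / d_e + β · n_e / 2) |e|` of the edge `e` on the given side of
the element `c` to the diagonal entry of the MFV matrix at `c`. -/
noncomputable def sideFlux {m n : ℕ} (α b₁ b₂ : ℝ) (wx wy : ℕ → ℝ) (ρv ρh : ℕ → ℕ → ℝ)
    (c : Fin m × Fin n) : Side → ℝ
  | .left => outflowCoeff α (-b₁) (dEdge wx m c.1) (ρv c.1 c.2) * wy c.2
  | .right => outflowCoeff α b₁ (dEdge wx m (c.1 + 1)) (ρv (c.1 + 1) c.2) * wy c.2
  | .bottom => outflowCoeff α (-b₂) (dEdge wy n c.2) (ρh c.2 c.1) * wx c.1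
  | .top => outflowCoeff α b₂ (dEdge wy n (c.2 + 1)) (ρh (c.2 + 1) c.1) * wx c.1

section Entries

variable {m n : ℕ} {α b₁ b₂ : ℝ} {wx wy : ℕ → ℝ} {γ ρv ρh : ℕ → ℕ → ℝ}

lemma sideFlux_nonneg (hα : 0 < α)
    (hwx : ∀ i < m, 0 < wx i) (hwy : ∀ j < n, 0 < wy j)
    (hρv : ∀ k ≤ m, ∀ j < n, |b₁| * dEdge wx m k / (2 * α) - 1 ≤ ρv k j)
    (hρh : ∀ k ≤ n, ∀ i < m, |b₂| * dEdge wy n k / (2 * α) - 1 ≤ ρh k i)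
    (c : Fin m × Fin n) (s : Side) : 0 ≤ sideFlux α b₁ b₂ wx wy ρv ρh c s := by
  obtain ⟨⟨i, hi⟩, ⟨j, hj⟩⟩ := c
  have vertical {b : ℝ} (hb : |b| = |b₁|) {k : ℕ} (hk : k ≤ m) :
      0 ≤ outflowCoeff α b (dEdge wx m k) (ρv k j) * wy j :=
    mul_nonneg (outflowCoeff_nonneg hα (dEdge_pos (by lia) hwx hk) (hb ▸ hρv k hk j hj))
      (hwy j hj).le
  have horizontal {b : ℝ} (hb : |b| = |b₂|) {k : ℕ} (hk : k ≤ n) :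
      0 ≤ outflowCoeff α b (dEdge wy n k) (ρh k i) * wx i :=
    mul_nonneg (outflowCoeff_nonneg hα (dEdge_pos (by lia) hwy hk) (hb ▸ hρh k hk i hi))
      (hwx i hi).le
  cases s
  exacts [vertical (abs_neg b₁) hi.le, vertical rfl hi, horizontal (abs_neg b₂) hj.le,
    horizontal rfl hj]

lemma mfvMatrix_apply_self (c : Fin m × Fin n) :
    mfvMatrix m n α b₁ b₂ wx wy γ ρv ρh c c =
      ∑ s, sideFlux α b₁ b₂ wx wy ρv ρh c s + γ c.1 c.2 * (wx c.1 * wy c.2) := by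
  simp only [mfvMatrix, if_true, Side.sum_eq, sideFlux, outflowCoeff]

lemma mfvMatrix_apply_of_isAcross {c r : Fin m × Fin n} {s : Side} (h : s.IsAcross c r) :
    mfvMatrix m n α b₁ b₂ wx wy γ ρv ρh r c = -sideFlux α b₁ b₂ wx wy ρv ρh c s := by
  simp only [mfvMatrix, if_neg h.ne]
  cases s <;> simp only [sideFlux, outflowCoeff] <;> obtain ⟨same_line, succ⟩ := h
  case left =>
    rw [if_pos ⟨same_line, succ⟩, same_line, succ]
    ring
  case right =>
    rw [if_neg (by lia), if_pos ⟨same_line, succ⟩, same_line, succ]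
    ring
  case bottom =>
    rw [if_neg (by lia), if_neg (by lia), if_pos ⟨same_line, succ⟩, same_line, succ]
    ring
  case top =>
    rw [if_neg (by lia), if_neg (by lia), if_neg (by lia), if_pos ⟨same_line, succ⟩,
      same_line, succ]
    ring

lemma mfvMatrix_apply_of_not_isAcross {c r : Fin m × Fin n} (hne : r ≠ c)
    (h : ∀ s : Side, ¬ s.IsAcross c r) :
    mfvMatrix m n α b₁ b₂ wx wy γ ρv ρh r c = 0 :=
  (if_neg hne).trans <| (if_neg (h .left)).trans <| (if_neg (h .right)).trans <|
    (if_neg (h .bottom)).trans (if_neg (h .top))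

lemma mfvMatrix_apply_nonpos {c r : Fin m × Fin n} (hne : r ≠ c)
    (hflux : ∀ s, 0 ≤ sideFlux α b₁ b₂ wx wy ρv ρh c s) :
    mfvMatrix m n α b₁ b₂ wx wy γ ρv ρh r c ≤ 0 := by
  by_cases h : ∃ s : Side, s.IsAcross c r
  · obtain ⟨s, hs⟩ := h
    rw [mfvMatrix_apply_of_isAcross hs]
    exact neg_nonpos.2 (hflux s)
  · exact (mfvMatrix_apply_of_not_isAcross hne (not_exists.1 h)).le

lemma abs_mfvMatrix_apply_le {c r : Fin m × Fin n} (hne : r ≠ c)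
    (hflux : ∀ s, 0 ≤ sideFlux α b₁ b₂ wx wy ρv ρh c s) :
    |mfvMatrix m n α b₁ b₂ wx wy γ ρv ρh r c| ≤
      ∑ s : Side, if s.IsAcross c r then sideFlux α b₁ b₂ wx wy ρv ρh c s else 0 := by
  have summand_nonneg (s : Side) :
      0 ≤ if s.IsAcross c r then sideFlux α b₁ b₂ wx wy ρv ρh c s else 0 :=
    ite_nonneg (hflux s) le_rfl
  by_cases h : ∃ s : Side, s.IsAcross c r
  · obtain ⟨s, hs⟩ := h
    calc |mfvMatrix m n α b₁ b₂ wx wy γ ρv ρh r c|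
      _ = if s.IsAcross c r then sideFlux α b₁ b₂ wx wy ρv ρh c s else 0 := by
        rw [mfvMatrix_apply_of_isAcross hs, abs_neg, abs_of_nonneg (hflux s), if_pos hs]
      _ ≤ _ := Finset.single_le_sum (fun s _ ↦ summand_nonneg s) (Finset.mem_univ s)
  · rw [mfvMatrix_apply_of_not_isAcross hne (not_exists.1 h), abs_zero]
    exact Finset.sum_nonneg fun s _ ↦ summand_nonneg s

end Entries

theorem mfvMatrix_structure_general {m n : ℕ} {α b₁ b₂ : ℝ} (hα : 0 < α)
    {wx wy : ℕ → ℝ} (hwx : ∀ i < m, 0 < wx i) (hwy : ∀ j < n, 0 < wy j)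
    {γ : ℕ → ℕ → ℝ} (hγ : ∀ i < m, ∀ j < n, 0 < γ i j)
    {ρv ρh : ℕ → ℕ → ℝ}
    (hρv : ∀ k ≤ m, ∀ j < n, |b₁| * dEdge wx m k / (2 * α) - 1 ≤ ρv k j)
    (hρh : ∀ k ≤ n, ∀ i < m, |b₂| * dEdge wy n k / (2 * α) - 1 ≤ ρh k i) :
    (∀ p q, p ≠ q → mfvMatrix m n α b₁ b₂ wx wy γ ρv ρh p q ≤ 0) ∧
    (∀ p, 0 < mfvMatrix m n α b₁ b₂ wx wy γ ρv ρh p p) ∧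
    (∀ c, ∑ r ∈ Finset.univ.erase c, |mfvMatrix m n α b₁ b₂ wx wy γ ρv ρh r c| <
      mfvMatrix m n α b₁ b₂ wx wy γ ρv ρh c c) := by
  have hflux (c : Fin m × Fin n) (s : Side) : 0 ≤ sideFlux α b₁ b₂ wx wy ρv ρh c s :=
    sideFlux_nonneg hα hwx hwy hρv hρh c s
  have dominance (c : Fin m × Fin n) :
      ∑ r ∈ Finset.univ.erase c, |mfvMatrix m n α b₁ b₂ wx wy γ ρv ρh r c| <
        mfvMatrix m n α b₁ b₂ wx wy γ ρv ρh c c := by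
    have reaction_pos : 0 < γ c.1 c.2 * (wx c.1 * wy c.2) :=
      mul_pos (hγ _ c.1.2 _ c.2.2) (mul_pos (hwx _ c.1.2) (hwy _ c.2.2))
    calc ∑ r ∈ Finset.univ.erase c, |mfvMatrix m n α b₁ b₂ wx wy γ ρv ρh r c|
      _ ≤ ∑ s, sideFlux α b₁ b₂ wx wy ρv ρh c s :=
        sum_le_sum_of_subsingleton (hflux c) (Side.subsingleton_isAcross · c)
          fun _ hr ↦ abs_mfvMatrix_apply_le (Finset.ne_of_mem_erase hr) (hflux c)
      _ < mfvMatrix m n α b₁ b₂ wx wy γ ρv ρh c c := by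
        rw [mfvMatrix_apply_self]
        exact lt_add_of_pos_right _ reaction_pos
  exact ⟨fun _ _ hne ↦ mfvMatrix_apply_nonpos hne (hflux _),
    fun p ↦ (Finset.sum_nonneg fun _ _ ↦ abs_nonneg _).trans_lt (dominance p), dominance⟩

/-- structure part of Proposition 1. On a tensor-product rectangular
grid with positive element widths and heights, with `α > 0`, constant convective field
`β = (b₁, b₂)`, positive elementwise reaction means `γ̄`, and edge artificial viscosities
satisfying `ρ_e ≥ max (Pe_e - 1) 0` with local Péclet number `Pe_e = |β·n_e| d_e/(2α)`,
the stabilized MFV stiffness matrix `K` has nonpositive off-diagonal entries, positive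
diagonal entries, and is strictly diagonally dominant with respect to its columns:
`K_{c,c} > ∑_{r ≠ c} |K_{r,c}|` for every index `c`. -/
theorem mfvMatrix_structure (m n : ℕ) (hm : 1 ≤ m) (hn : 1 ≤ n)
    (α b₁ b₂ : ℝ) (hα : 0 < α)
    (wx wy : ℕ → ℝ) (hwx : ∀ i < m, 0 < wx i) (hwy : ∀ j < n, 0 < wy j)
    (γ : ℕ → ℕ → ℝ) (hγ : ∀ i < m, ∀ j < n, 0 < γ i j)
    (ρv ρh : ℕ → ℕ → ℝ)
    (hρv : ∀ k ≤ m, ∀ j < n, max (|b₁| * dEdge wx m k / (2 * α) - 1) 0 ≤ ρv k j)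
    (hρh : ∀ k ≤ n, ∀ i < m, max (|b₂| * dEdge wy n k / (2 * α) - 1) 0 ≤ ρh k i) :
    (∀ p q, p ≠ q → mfvMatrix m n α b₁ b₂ wx wy γ ρv ρh p q ≤ 0) ∧
    (∀ p, 0 < mfvMatrix m n α b₁ b₂ wx wy γ ρv ρh p p) ∧
    (∀ c, ∑ r ∈ Finset.univ.erase c, |mfvMatrix m n α b₁ b₂ wx wy γ ρv ρh r c| <
      mfvMatrix m n α b₁ b₂ wx wy γ ρv ρh c c) := by
  exact mfvMatrix_structure_general hα hwx hwy hγ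
    (fun k hk j hj ↦ (le_max_left _ _).trans (hρv k hk j hj))
    (fun k hk i hi ↦ (le_max_left _ _).trans (hρh k hk i hi))
end

section
/- (Consequence of Proposition 2: discrete maximum principle for the upwind-stabilized PM scheme.) Let N ≥ 2, ε_i > 0, h_i > 0, β_i ∈ ℝ for i = 1, …, N, and let M^stab ∈ ℝ^{(N−1)×(N−1)} be the tridiagonal matrix with entries M^stab_{i,i−1} = −ε_i/h_i − β_i⁺, M^stab_{i,i} = ε_i/h_i + ε_{i+1}/h_{i+1} + β_{i+1}⁺ − β_i⁻, M^stab_{i,i+1} = −ε_{i+1}/h_{i+1} + β_{i+1}⁻, and zero otherwise, where β⁺ = max(β,0) and β⁻ = min(β,0). Then M^stab is invertible and every entry of (M^stab)⁻¹ is nonnegative; in particular, if M^stab U = F with F entrywise nonnegative, then U is entrywise nonnegative. -/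
open Finset

/-- The stiffness matrix `M^stab` of the upwind-stabilized Primal Mixed (PM) finite
element scheme for the 1D advection–diffusion problem on a partition of `(0, L)` into `N`
intervals of lengths `h 1, …, h N`, with elementwise diffusion coefficients `ε i` and
advection coefficients `β i` (`i = 1, …, N`). It is the `(N-1) × (N-1)` tridiagonal
matrix (rows/columns indexed by the interior nodes `1, …, N-1`) with entries
`M_{i,i-1} = -ε_i/h_i - β_i⁺`,
`M_{i,i} = ε_i/h_i + ε_{i+1}/h_{i+1} + β_{i+1}⁺ - β_i⁻`,
`M_{i,i+1} = -ε_{i+1}/h_{i+1} + β_{i+1}⁻`, and `M_{i,j} = 0` for `|i - j| ≥ 2`,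
where `β⁺ = max β 0` and `β⁻ = min β 0`. -/
noncomputable def pmMatrix (N : ℕ) (ε β h : ℕ → ℝ) :
    Matrix (Fin (N - 1)) (Fin (N - 1)) ℝ := fun a b =>
  let i : ℕ := (a : ℕ) + 1
  let j : ℕ := (b : ℕ) + 1
  if i = j then ε i / h i + ε (i + 1) / h (i + 1) + max (β (i + 1)) 0 - min (β i) 0
  else if i = j + 1 then -(ε i / h i) - max (β i) 0
  else if j = i + 1 then -(ε (i + 1) / h (i + 1)) + min (β (i + 1)) 0
  else 0

/-!
The off-diagonal entries of `M^stab` are nonpositive, so it is enough to find `w ≥ 0` with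
`wᵀ M^stab > 0`: if `M v ≥ 0`, then the negative part satisfies `M v⁻ ≤ 0`, whence
`(wᵀ M) v⁻ ≤ 0` and `v⁻ = 0`.

Column `j` of `M^stab` only involves two positive numbers `l j` and `r j`, the rates at which node
`j` sends mass to its left and right neighbours. For `w ≥ 0` defined on the boundary nodes as well,
`(wᵀ M) j` is at least `l j * (w j - w (j - 1)) - r j * (w (j + 1) - w j)`, so it is positive as
soon as the increments of `w` are positive and decay fast enough.
-/

open Matrix

section MonotoneMatrix

variable {n 𝕜 : Type*} [Fintype n]

/-- A square matrix is monotone (in the sense of Collatz) if `A v ≥ 0` entrywise forces `v ≥ 0`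
entrywise. This is the discrete maximum principle for the linear system `A v = b`. -/
def IsMonotoneMatrix [NonUnitalNonAssocSemiring 𝕜] [LE 𝕜] (A : Matrix n n 𝕜) : Prop :=
  ∀ v : n → 𝕜, 0 ≤ A *ᵥ v → 0 ≤ v

namespace IsMonotoneMatrix

theorem mulVec_injective [NonUnitalNonAssocRing 𝕜] [PartialOrder 𝕜] [IsOrderedAddMonoid 𝕜]
    {A : Matrix n n 𝕜} (hA : IsMonotoneMatrix A) : Function.Injective A.mulVec := by
  have le_of_mulVec_eq {u v : n → 𝕜} (huv : A *ᵥ u = A *ᵥ v) : u ≤ v :=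
    sub_nonneg.mp <| hA (v - u) (by rw [mulVec_sub, huv, sub_self])
  exact fun u v huv => (le_of_mulVec_eq huv).antisymm (le_of_mulVec_eq huv.symm)

variable [DecidableEq n] [Field 𝕜] [PartialOrder 𝕜] [IsOrderedRing 𝕜] {A : Matrix n n 𝕜}

theorem isUnit (hA : IsMonotoneMatrix A) : IsUnit A :=
  mulVec_injective_iff_isUnit.mp hA.mulVec_injective

theorem inv_nonneg (hA : IsMonotoneMatrix A) (i j : n) : 0 ≤ A⁻¹ i j := by
  have mulVec_col : A *ᵥ A⁻¹.col j = Pi.single j 1 := by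
    rw [← mulVec_single_one, mulVec_mulVec,
      mul_nonsing_inv A ((isUnit_iff_isUnit_det A).mp hA.isUnit), one_mulVec]
  have col_nonneg : 0 ≤ A⁻¹.col j :=
    hA _ (mulVec_col ▸ Pi.single_nonneg.mpr zero_le_one)
  exact col_nonneg i

end IsMonotoneMatrix

variable [Ring 𝕜] [LinearOrder 𝕜] {A : Matrix n n 𝕜}

theorem mulVec_negPart_nonpos [IsOrderedRing 𝕜] (hA : ∀ i j, i ≠ j → A i j ≤ 0) {v : n → 𝕜}
    (hv : 0 ≤ A *ᵥ v) : A *ᵥ v⁻ ≤ 0 := by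
  intro i
  rcases le_or_gt 0 (v i) with hi | hi
  · refine sum_nonpos fun j _ => ?_
    rcases eq_or_ne i j with rfl | hij
    · simp [negPart_eq_zero.mpr hi]
    · exact mul_nonpos_of_nonpos_of_nonneg (hA i j hij) (negPart_nonneg (v j))
  · calc (A *ᵥ v⁻) i ≤ (A *ᵥ -v) i := by
          refine sum_le_sum fun j _ => ?_
          rcases eq_or_ne i j with rfl | hij
          · simp [negPart_eq_neg.mpr hi.le]
          · exact mul_le_mul_of_nonpos_left (neg_le_negPart (v j)) (hA i j hij)
      _ = -(A *ᵥ v) i := by rw [mulVec_neg, Pi.neg_apply]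
      _ ≤ 0 := neg_nonpos.mpr (hv i)

theorem isMonotoneMatrix_of_vecMul_pos [IsStrictOrderedRing 𝕜] (hA : ∀ i j, i ≠ j → A i j ≤ 0)
    {w : n → 𝕜} (hw : 0 ≤ w) (hwA : ∀ j, 0 < (w ᵥ* A) j) : IsMonotoneMatrix A := by
  intro v hv
  have term_nonneg (j : n) : 0 ≤ (w ᵥ* A) j * v⁻ j := mul_nonneg (hwA j).le (negPart_nonneg (v j))
  have sum_nonpos : ∑ j, (w ᵥ* A) j * v⁻ j ≤ 0 :=
    calc ∑ j, (w ᵥ* A) j * v⁻ j = w ⬝ᵥ (A *ᵥ v⁻) := (dotProduct_mulVec w A v⁻).symm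
      _ ≤ w ⬝ᵥ 0 := dotProduct_le_dotProduct_of_nonneg_left (mulVec_negPart_nonpos hA hv) hw
      _ = 0 := dotProduct_zero w
  have negPart_zero (j : n) : v⁻ j = 0 := by
    have term_zero := (sum_eq_zero_iff_of_nonneg fun j _ => term_nonneg j).mp
      (sum_nonpos.antisymm (sum_nonneg fun j _ => term_nonneg j)) j (mem_univ j)
    exact (mul_eq_zero.mp term_zero).resolve_left (hwA j).ne'
  exact negPart_eq_zero.mp (funext negPart_zero)

end MonotoneMatrix

theorem sum_ite_le_of_subsingleton {ι M : Type*} [AddCommMonoid M] [PartialOrder M]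
    [IsOrderedAddMonoid M] {s : Finset ι} {P : ι → Prop} [DecidablePred P] {c : M} (hc : 0 ≤ c)
    (hP : {i | P i}.Subsingleton) : ∑ i ∈ s, (if P i then c else 0) ≤ c := by
  have card_le : #{i ∈ s | P i} ≤ 1 :=
    card_le_one.mpr fun i hi j hj => hP (mem_filter.mp hi).2 (mem_filter.mp hj).2
  rw [← sum_filter, sum_const]
  simpa using nsmul_le_nsmul_left hc card_le

section BirthDeath

variable {𝕜 : Type*} {n : ℕ} {l r : ℕ → 𝕜}

/-- The matrix of the stationary balance equations of a birth–death process on the sites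
`0, …, n - 1`: mass leaves site `j` at rate `l j` to the left and at rate `r j` to the right, and is
absorbed outside. Equivalently, the negative transpose of the generator of the process. The
rates are sequences on `ℕ` of which only the values below `n` matter. -/
def birthDeathMatrix [AddGroup 𝕜] (n : ℕ) (l r : ℕ → 𝕜) : Matrix (Fin n) (Fin n) 𝕜 :=
  of fun i j => (if i = j then l j + r j else 0) - (if (i : ℕ) + 1 = j then l j else 0) -
    (if (i : ℕ) = j + 1 then r j else 0)

theorem birthDeathMatrix_apply_nonpos [AddCommGroup 𝕜] [PartialOrder 𝕜] [IsOrderedAddMonoid 𝕜]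
    (hl : ∀ j < n, 0 ≤ l j) (hr : ∀ j < n, 0 ≤ r j) {i j : Fin n} (hij : i ≠ j) :
    birthDeathMatrix n l r i j ≤ 0 := by
  have left_nonneg : 0 ≤ if (i : ℕ) + 1 = j then l j else 0 := ite_nonneg (hl j j.2) le_rfl
  have right_nonneg : 0 ≤ if (i : ℕ) = j + 1 then r j else 0 := ite_nonneg (hr j j.2) le_rfl
  rw [birthDeathMatrix, of_apply, if_neg hij, sub_sub, zero_sub]
  exact neg_nonpos.mpr (add_nonneg left_nonneg right_nonneg)

/-- Site `j` carries the weight `w (j + 1)`, so `w 0` and `w (n + 1)` belong to the absorbing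
states. The product does not see these two weights, so equality can fail at the end sites. -/
theorem le_vecMul_birthDeathMatrix [CommRing 𝕜] [PartialOrder 𝕜] [IsOrderedAddMonoid 𝕜]
    {w : ℕ → 𝕜} {j : Fin n} (hl : 0 ≤ w j * l j) (hr : 0 ≤ w (j + 2) * r j) :
    l j * (w (j + 1) - w j) - r j * (w (j + 2) - w (j + 1)) ≤
      ((fun i : Fin n => w (i + 1)) ᵥ* birthDeathMatrix n l r) j := by
  have entry (i : Fin n) : w (i + 1) * birthDeathMatrix n l r i j =
      (if i = j then w (j + 1) * (l j + r j) else 0) - (if (i : ℕ) + 1 = j then w j * l j else 0) -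
        (if (i : ℕ) = j + 1 then w (j + 2) * r j else 0) := by
    simp only [birthDeathMatrix, of_apply, mul_sub, mul_ite, mul_zero]
    grind
  have left_le : ∑ i : Fin n, (if (i : ℕ) + 1 = j then w j * l j else 0) ≤ w j * l j :=
    sum_ite_le_of_subsingleton hl fun a ha b hb => Fin.ext (Nat.succ_injective (ha.trans hb.symm))
  have right_le :
      ∑ i : Fin n, (if (i : ℕ) = j + 1 then w (j + 2) * r j else 0) ≤ w (j + 2) * r j :=
    sum_ite_le_of_subsingleton hr fun a ha b hb => Fin.ext (ha.trans hb.symm)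
  calc l j * (w (j + 1) - w j) - r j * (w (j + 2) - w (j + 1))
      = w (j + 1) * (l j + r j) - w j * l j - w (j + 2) * r j := by ring
    _ ≤ _ := sub_le_sub (sub_le_sub_left left_le _) right_le
    _ = ∑ i : Fin n, w (i + 1) * birthDeathMatrix n l r i j := by
        simp only [entry, sum_sub_distrib, sum_ite_eq', mem_univ, if_true]

variable [Field 𝕜] [LinearOrder 𝕜] [IsStrictOrderedRing 𝕜]

theorem exists_birthDeath_strict_supersolution (hl : ∀ j < n, 0 < l j) (hr : ∀ j < n, 0 < r j) :
    ∃ w : ℕ → 𝕜, (∀ k ≤ n + 1, 0 ≤ w k) ∧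
      ∀ j < n, r j * (w (j + 2) - w (j + 1)) < l j * (w (j + 1) - w j) := by
  -- Without the factor 2 the increments `d` would give equality at every site.
  let d (k : ℕ) : 𝕜 := ∏ m ∈ range k, l m / (2 * r m)
  have d_pos {k : ℕ} (hk : k ≤ n) : 0 < d k := prod_pos fun m hm =>
    have hm : m < n := (mem_range.mp hm).trans_le hk
    div_pos (hl m hm) (mul_pos two_pos (hr m hm))
  refine ⟨fun k => ∑ i ∈ range k, d i, fun k hk => sum_nonneg fun i hi => (d_pos ?_).le,
    fun j hj => ?_⟩
  · exact Nat.le_of_lt_succ ((mem_range.mp hi).trans_le hk)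
  · simp only [sum_range_succ_sub_sum]
    calc r j * d (j + 1) = l j * d j / 2 := by
          have := (hr j hj).ne'
          simp only [d, prod_range_succ]
          field_simp
      _ < l j * d j := half_lt_self (mul_pos (hl j hj) (d_pos hj.le))

theorem isMonotoneMatrix_birthDeathMatrix (hl : ∀ j < n, 0 < l j) (hr : ∀ j < n, 0 < r j) :
    IsMonotoneMatrix (birthDeathMatrix n l r) := by
  obtain ⟨w, w_nonneg, w_super⟩ := exists_birthDeath_strict_supersolution hl hr
  refine isMonotoneMatrix_of_vecMul_pos (w := fun i => w (i + 1))
    (fun i j => birthDeathMatrix_apply_nonpos (fun k hk => (hl k hk).le) fun k hk => (hr k hk).le)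
    (fun i => w_nonneg _ (by lia)) fun j => ?_
  exact (sub_pos.mpr (w_super j j.2)).trans_le <| le_vecMul_birthDeathMatrix
    (mul_nonneg (w_nonneg _ (by lia)) (hl j j.2).le)
    (mul_nonneg (w_nonneg _ (by lia)) (hr j j.2).le)

end BirthDeath

section PrimalMixed

variable {N : ℕ} {ε β h : ℕ → ℝ}

/-- The `0`-based site `j` is the interior node `j + 1`, between elements `j + 1` and `j + 2`. -/
theorem pmMatrix_eq_birthDeathMatrix : pmMatrix N ε β h = birthDeathMatrix (N - 1)
    (fun j => ε (j + 1) / h (j + 1) - min (β (j + 1)) 0)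
    (fun j => ε (j + 2) / h (j + 2) + max (β (j + 2)) 0) := by
  ext i j
  simp only [pmMatrix, birthDeathMatrix, of_apply, Fin.ext_iff]
  split_ifs <;> grind

theorem isMonotoneMatrix_pmMatrix (hε : ∀ i, 1 ≤ i → i ≤ N → 0 < ε i)
    (hh : ∀ i, 1 ≤ i → i ≤ N → 0 < h i) : IsMonotoneMatrix (pmMatrix N ε β h) := by
  have diffusion_pos {i : ℕ} (hi : 1 ≤ i) (hiN : i ≤ N) : 0 < ε i / h i :=
    div_pos (hε i hi hiN) (hh i hi hiN)
  rw [pmMatrix_eq_birthDeathMatrix]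
  exact isMonotoneMatrix_birthDeathMatrix
    (fun j hj => sub_pos.mpr <| (min_le_right _ _).trans_lt (diffusion_pos (by lia) (by lia)))
    (fun j hj => add_pos_of_pos_of_nonneg (diffusion_pos (by lia) (by lia)) (le_max_right _ _))

end PrimalMixed

/-- consequence of Proposition 2: discrete maximum principle for the
upwind-stabilized PM scheme. Let `N ≥ 2`, `ε_i > 0`, `h_i > 0`, `β_i ∈ ℝ` for
`i = 1, …, N`. Then `M^stab` is invertible and every entry of `(M^stab)⁻¹` is
nonnegative; in particular, if `M^stab U = F` with `F` entrywise nonnegative, then `U` is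
entrywise nonnegative. -/
theorem pmMatrix_discrete_maximum_principle (N : ℕ) (hN : 2 ≤ N) (ε β h : ℕ → ℝ)
    (hε : ∀ i, 1 ≤ i → i ≤ N → 0 < ε i) (hh : ∀ i, 1 ≤ i → i ≤ N → 0 < h i) :
    IsUnit (pmMatrix N ε β h) ∧
    (∀ a b, 0 ≤ (pmMatrix N ε β h)⁻¹ a b) ∧
    (∀ U F : Fin (N - 1) → ℝ, (pmMatrix N ε β h).mulVec U = F →
      (∀ a, 0 ≤ F a) → ∀ a, 0 ≤ U a) := by
  have hM : IsMonotoneMatrix (pmMatrix N ε β h) := isMonotoneMatrix_pmMatrix hε hh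
  exact ⟨hM.isUnit, hM.inv_nonneg, fun U F hUF hF => hM U (hUF ▸ hF)⟩
end

section
/- (Junction value on the three-segment network.) Let ε > 0, β₁, β₂, β₃ > 0 and L₁, L₂, L₃ > 0, and let B(x) = x/(exp(x) − 1) denote the inverse of the Bernoulli function. For ω ∈ ℝ define the segment fluxes J₁ = β₁·(1·exp(β₁L₁/ε) − ω)/(exp(β₁L₁/ε) − 1), J₂ = β₂·(ω·exp(β₂L₂/ε) − 0)/(exp(β₂L₂/ε) − 1) and J₃ = β₃·(ω·exp(β₃L₃/ε) − 0)/(exp(β₃L₃/ε) − 1). Then the flux continuity condition J₁ = J₂ + J₃ holds if and only if ω = [(ε/L₁)·B(−β₁L₁/ε)·1] / [(ε/L₁)·B(β₁L₁/ε) + (ε/L₂)·B(−β₂L₂/ε) + (ε/L₃)·B(−β₃L₃/ε)]; in particular the denominator is positive and ω is uniquely determined. -/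
/-!
Writing `x = β * L / ε` for the Péclet number of a segment, its flux is
`ε / L * (B (-x) * a - B x * b)`, where `a` and `b` are the values at the two ends. Flux
continuity is therefore affine in the junction value `ω`, and the coefficient of `ω` is a sum of
terms `ε / L * B (± x)`, which are positive because `exp x - 1` has the sign of `x`.
-/

/-- The inverse Bernoulli function, which weights the end values of a segment in its flux. The
division convention gives it the value `0` at `0`, not the limit `1`. -/
noncomputable def inverseBernoulli (x : ℝ) : ℝ :=
  x / (Real.exp x - 1)

/-- The constant flux of the stationary advection–diffusion profile on a segment of length `L`
with advection `β` and diffusion `ε`, going from end value `a` to end value `b`. As `β` tends to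
`0` it tends to `ε * (a - b) / L`, whereas the division convention gives `0` at `β = 0`. -/
noncomputable def segmentFlux (ε β L a b : ℝ) : ℝ :=
  β * (a * Real.exp (β * L / ε) - b) / (Real.exp (β * L / ε) - 1)

theorem inverseBernoulli_neg (x : ℝ) :
    inverseBernoulli (-x) = Real.exp x * inverseBernoulli x := by
  have exp_neg_sub_one : Real.exp (-x) - 1 = -((Real.exp x - 1) / Real.exp x) := by
    rw [Real.exp_neg, sub_div, div_self (Real.exp_ne_zero x), neg_sub, one_div]
  rw [inverseBernoulli, inverseBernoulli, exp_neg_sub_one, neg_div_neg_eq, div_div_eq_mul_div,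
    mul_comm x, mul_div_assoc]

theorem inverseBernoulli_pos {x : ℝ} (hx : x ≠ 0) : 0 < inverseBernoulli x := by
  rcases hx.lt_or_gt with hneg | hpos
  · exact div_pos_of_neg_of_neg hneg (sub_neg.2 (Real.exp_lt_one_iff.2 hneg))
  · exact div_pos hpos (sub_pos.2 (Real.one_lt_exp_iff.2 hpos))

theorem segmentFlux_eq_inverseBernoulli {ε L : ℝ} (hε : ε ≠ 0) (hL : L ≠ 0) (β a b : ℝ) :
    segmentFlux ε β L a b =
      ε / L * inverseBernoulli (-(β * L / ε)) * a - ε / L * inverseBernoulli (β * L / ε) * b := by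
  have advection_eq : ε / L * (β * L / ε) = β := by field_simp
  calc
    segmentFlux ε β L a b =
        ε / L * (β * L / ε) * (a * Real.exp (β * L / ε) - b) / (Real.exp (β * L / ε) - 1) := by
      rw [advection_eq, segmentFlux]
    _ = _ := by
      rw [inverseBernoulli_neg, inverseBernoulli]
      ring

theorem div_mul_inverseBernoulli_pos {ε L x : ℝ} (hε : 0 < ε) (hL : 0 < L) (hx : x ≠ 0) :
    0 < ε / L * inverseBernoulli x :=
  mul_pos (div_pos hε hL) (inverseBernoulli_pos hx)

theorem sum_add_sum_pos {E F R : Type*} [AddCommMonoid R] [PartialOrder R]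
    [IsOrderedCancelAddMonoid R] {s : Finset E} {t : Finset F} {p : E → R} {q : F → R}
    (hst : s.Nonempty ∨ t.Nonempty) (hp : ∀ i ∈ s, 0 < p i) (hq : ∀ i ∈ t, 0 < q i) :
    0 < ∑ i ∈ s, p i + ∑ i ∈ t, q i := by
  rcases hst with hs | ht
  · exact add_pos_of_pos_of_nonneg (Finset.sum_pos hp hs)
      (Finset.sum_nonneg fun i hi ↦ (hq i hi).le)
  · exact add_pos_of_nonneg_of_pos (Finset.sum_nonneg fun i hi ↦ (hp i hi).le)
      (Finset.sum_pos hq ht)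

theorem sum_sub_eq_sum_sub_iff_eq_div {E K : Type*} [Field K] {s t : Finset E} {p q u : E → K}
    (hD : ∑ i ∈ s, q i + ∑ i ∈ t, p i ≠ 0) (ω : K) :
    ∑ i ∈ s, (p i * u i - q i * ω) = ∑ i ∈ t, (p i * ω - q i * u i) ↔
      ω = (∑ i ∈ s, p i * u i + ∑ i ∈ t, q i * u i) / (∑ i ∈ s, q i + ∑ i ∈ t, p i) := by
  simp only [Finset.sum_sub_distrib, ← Finset.sum_mul]
  rw [eq_div_iff hD, sub_eq_sub_iff_add_eq_add, mul_add, mul_comm ω, mul_comm ω, eq_comm,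
    add_comm (_ * ω)]

theorem junction_value_three_segment_network_general {E : Type*}
    {inlets outlets : Finset E} {ε : ℝ} {β L : E → ℝ} (u : E → ℝ)
    (hne : inlets.Nonempty ∨ outlets.Nonempty) (hε : 0 < ε)
    (hβ : ∀ i, β i ≠ 0) (hL : ∀ i, 0 < L i) :
    let p : E → ℝ := fun i ↦ ε / L i * inverseBernoulli (-(β i * L i / ε))
    let q : E → ℝ := fun i ↦ ε / L i * inverseBernoulli (β i * L i / ε)
    let D : ℝ := ∑ i ∈ inlets, q i + ∑ i ∈ outlets, p i
    0 < D ∧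
    ∀ ω : ℝ,
      ∑ i ∈ inlets, segmentFlux ε (β i) (L i) (u i) ω =
        ∑ i ∈ outlets, segmentFlux ε (β i) (L i) ω (u i) ↔
      ω = (∑ i ∈ inlets, p i * u i + ∑ i ∈ outlets, q i * u i) / D := by
  intro p q D
  have peclet_ne_zero (i : E) : β i * L i / ε ≠ 0 :=
    div_ne_zero (mul_ne_zero (hβ i) (hL i).ne') hε.ne'
  have flux_eq (i : E) (a b : ℝ) : segmentFlux ε (β i) (L i) a b = p i * a - q i * b :=
    segmentFlux_eq_inverseBernoulli hε.ne' (hL i).ne' (β i) a b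
  have D_pos : 0 < D := sum_add_sum_pos hne
    (fun i _ ↦ div_mul_inverseBernoulli_pos hε (hL i) (peclet_ne_zero i))
    (fun i _ ↦ div_mul_inverseBernoulli_pos hε (hL i) (neg_ne_zero.2 (peclet_ne_zero i)))
  refine ⟨D_pos, fun ω ↦ ?_⟩
  simp only [flux_eq]
  exact sum_sub_eq_sum_sub_iff_eq_div D_pos.ne' ω

/-- junction value on the three-segment network. Let `ε > 0`,
`β₁, β₂, β₃ > 0`, `L₁, L₂, L₃ > 0`, and let `B(x) = x/(exp x - 1)` be the inverse of the
Bernoulli function. For `ω ∈ ℝ` define the segment fluxes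
`J₁ = β₁·(1·exp(β₁L₁/ε) - ω)/(exp(β₁L₁/ε) - 1)`,
`J₂ = β₂·(ω·exp(β₂L₂/ε) - 0)/(exp(β₂L₂/ε) - 1)`,
`J₃ = β₃·(ω·exp(β₃L₃/ε) - 0)/(exp(β₃L₃/ε) - 1)`.
Then the flux continuity condition `J₁ = J₂ + J₃` holds if and only if
`ω = (ε/L₁·B(-β₁L₁/ε)·1) / (ε/L₁·B(β₁L₁/ε) + ε/L₂·B(-β₂L₂/ε) + ε/L₃·B(-β₃L₃/ε))`;
in particular the denominator is positive and `ω` is uniquely determined. -/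
theorem junction_value_three_segment_network (ε β₁ β₂ β₃ L₁ L₂ L₃ : ℝ)
    (hε : 0 < ε) (hβ₁ : 0 < β₁) (hβ₂ : 0 < β₂) (hβ₃ : 0 < β₃)
    (hL₁ : 0 < L₁) (hL₂ : 0 < L₂) (hL₃ : 0 < L₃) :
    let B : ℝ → ℝ := fun x => x / (Real.exp x - 1)
    let D : ℝ := ε / L₁ * B (β₁ * L₁ / ε) + ε / L₂ * B (-(β₂ * L₂) / ε)
      + ε / L₃ * B (-(β₃ * L₃) / ε)
    0 < D ∧
    ∀ ω : ℝ,
      (β₁ * (1 * Real.exp (β₁ * L₁ / ε) - ω) / (Real.exp (β₁ * L₁ / ε) - 1) =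
        β₂ * (ω * Real.exp (β₂ * L₂ / ε) - 0) / (Real.exp (β₂ * L₂ / ε) - 1)
          + β₃ * (ω * Real.exp (β₃ * L₃ / ε) - 0) / (Real.exp (β₃ * L₃ / ε) - 1)) ↔
      ω = (ε / L₁ * B (-(β₁ * L₁) / ε) * 1) / D := by
  intro B D
  have star := junction_value_three_segment_network_general
    (inlets := {(0 : Fin 3)}) (outlets := {1, 2}) (β := ![β₁, β₂, β₃]) (L := ![L₁, L₂, L₃])
    ![1, 0, 0] (.inl (Finset.singleton_nonempty 0)) hε
    (by simp [Fin.forall_fin_succ, hβ₁.ne', hβ₂.ne', hβ₃.ne'])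
    (by simp [Fin.forall_fin_succ, hL₁, hL₂, hL₃])
  have B_eq : B = inverseBernoulli := rfl
  simpa [segmentFlux, B_eq, D, neg_div, add_assoc] using star
end
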